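/- Let K, E ≥ 2 be integers, L ∈ [0,1]^{K×E} a loss matrix with rows ℓ_a, and 𝒜 a maximal subset of Pareto optimal actions containing no two duplicate actions. Let ℋ be the set of functions φ : 𝒜 → 𝒜 with φ(a) ∈ N_a for all a ∈ 𝒜. Then there exists a constant ε > 0, depending only on L, such that: for every n, every sequence u_1, …, u_n ∈ 𝒫_{E−1}, every sequence B_1, …, B_n of actions in 𝒜, and every a*_n ∈ argmin_{a∈[K]} ∑_{t=1}^n ⟨ℓ_a, u_t⟩, one has ∑_{t=1}^n ⟨ℓ_{B_t} − ℓ_{a*_n}, u_t⟩ ≤ (1/ε) · max_{φ ∈ ℋ} ∑_{t=1}^n ⟨ℓ_{B_t} − ℓ_{φ(B_t)}, u_t⟩. -/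

import Mathlib

open scoped BigOperators

/-- The probability simplex in `ℝ^E`. -/
def probSimplex (E : ℕ) : Set (Fin E → ℝ) :=
  {u | (∀ i, 0 ≤ u i ∧ u i ≤ 1) ∧ ∑ i, u i = 1}

/-- The cell of action `a`: the set of distributions on which `a` is optimal. -/
def cell {K E : ℕ} (L : Fin K → Fin E → ℝ) (a : Fin K) : Set (Fin E → ℝ) :=
  {u | u ∈ probSimplex E ∧ ∀ b, ∑ i, L a i * u i ≤ ∑ i, L b i * u i}

/-- The dimension of a set: the dimension of its affine hull. -/
noncomputable def dimSet {E : ℕ} (s : Set (Fin E → ℝ)) : ℕ :=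
  Module.finrank ℝ (affineSpan ℝ s).direction

/-- Action `a` is Pareto optimal if its cell has dimension `E - 1`. -/
def ParetoOptimal {K E : ℕ} (L : Fin K → Fin E → ℝ) (a : Fin K) : Prop :=
  (cell L a).Nonempty ∧ dimSet (cell L a) = E - 1

/-- Pareto optimal actions `a` and `b` are neighbors if `C_a ∩ C_b` has dimension `E - 2`. -/
def Neighbors {K E : ℕ} (L : Fin K → Fin E → ℝ) (a b : Fin K) : Prop :=
  ParetoOptimal L a ∧ ParetoOptimal L b ∧
    (cell L a ∩ cell L b).Nonempty ∧ dimSet (cell L a ∩ cell L b) = E - 2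
/-- `b` belongs to the neighborhood `N_a`: either `b = a`, or `b` is a neighbor of `a`
that is not a duplicate of `a`. -/
def InNbhd {K E : ℕ} (L : Fin K → Fin E → ℝ) (a b : Fin K) : Prop :=
  b = a ∨ (Neighbors L a b ∧ L b ≠ L a)

section

open Filter Topology

variable {K E : ℕ}

theorem mem_cell_iff {L : Fin K → Fin E → ℝ} {a : Fin K} {u : Fin E → ℝ} :
    u ∈ cell L a ↔ 0 ≤ u ∧ ∑ i, u i = 1 ∧ ∀ b, L a ⬝ᵥ u ≤ L b ⬝ᵥ u := by
  constructor
  · rintro ⟨⟨h, hs⟩, hb⟩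
    exact ⟨fun i => (h i).1, hs, hb⟩
  · rintro ⟨h, hs, hb⟩
    refine ⟨⟨fun i => ⟨h i, ?_⟩, hs⟩, hb⟩
    rw [← hs]
    exact Finset.single_le_sum (fun j _ => h j) (Finset.mem_univ i)

/-- The linear functional `v ↦ ⟨g, v⟩`. -/
noncomputable def dotLin (g : Fin E → ℝ) : (Fin E → ℝ) →ₗ[ℝ] ℝ where
  toFun v := g ⬝ᵥ v
  map_add' := dotProduct_add g
  map_smul' c v := by simp

@[simp] theorem dotLin_apply (g v : Fin E → ℝ) : dotLin g v = g ⬝ᵥ v := rfl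

theorem dotLin_ne_zero {g : Fin E → ℝ} (hg : g ≠ 0) : dotLin g ≠ 0 := fun h =>
  hg (dotProduct_self_eq_zero.1 (by simpa using LinearMap.congr_fun h g))

theorem one_dotProduct_eq_sum (v : Fin E → ℝ) : (1 : Fin E → ℝ) ⬝ᵥ v = ∑ i, v i := by
  simp [dotProduct]

theorem finrank_ker_dotLin {g : Fin E → ℝ} (hg : g ≠ 0) :
    Module.finrank ℝ (dotLin g).ker = E - 1 := by
  have := Module.Dual.finrank_ker_add_one_of_ne_zero (dotLin_ne_zero hg)
  simp at this
  omega

theorem one_ne_zero_of_two_le (hE : 2 ≤ E) : (1 : Fin E → ℝ) ≠ 0 := fun h => by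
  simpa using congr_fun h ⟨0, by omega⟩

/-- Two linearly independent functionals cut out a subspace of codimension two. -/
theorem finrank_ker_inf_ker {g : Fin E → ℝ} {w x : Fin E → ℝ}
    (hgw : g ⬝ᵥ w ≠ 0) (hgx : g ⬝ᵥ x = 0) (hx : (1 : Fin E → ℝ) ⬝ᵥ x ≠ 0) :
    Module.finrank ℝ ((dotLin g).ker ⊓ (dotLin 1).ker : Submodule ℝ (Fin E → ℝ)) = E - 2 := by
  have hs : Function.Surjective ((dotLin g).prod (dotLin 1)) := by
    rintro ⟨p, q⟩
    refine ⟨(p / (g ⬝ᵥ w)) • w +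
      ((q - p / (g ⬝ᵥ w) * ((1 : Fin E → ℝ) ⬝ᵥ w)) / ((1 : Fin E → ℝ) ⬝ᵥ x)) • x, ?_⟩
    simp only [LinearMap.prod_apply, Function.prod_apply, dotLin_apply, dotProduct_add, dotProduct_smul,
      smul_eq_mul, hgx, Prod.mk.injEq]
    constructor <;> field_simp <;> ring
  have := LinearMap.finrank_range_add_finrank_ker ((dotLin g).prod (dotLin 1))
  rw [LinearMap.range_eq_top.2 hs, finrank_top, LinearMap.ker_prod] at this
  simp at this
  omega

/-- A set which is relatively open near `x` in the affine space `x + M` has direction `M`. -/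
theorem direction_affineSpan_eq {s : Set (Fin E → ℝ)} {M : Submodule ℝ (Fin E → ℝ)}
    {x : Fin E → ℝ} (hx : x ∈ s) (hs : ∀ y ∈ s, y - x ∈ M)
    (hM : ∀ d ∈ M, ∃ r > (0 : ℝ), x + r • d ∈ s) :
    (affineSpan ℝ s).direction = M := by
  rw [direction_affineSpan]
  apply le_antisymm
  · rw [vectorSpan_eq_span_vsub_set_right ℝ hx, Submodule.span_le]
    rintro _ ⟨y, hy, rfl⟩
    exact hs y hy
  · intro d hd
    obtain ⟨r, hr, h⟩ := hM d hd
    have := vsub_mem_vectorSpan ℝ h hx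
    simp only [vsub_eq_sub, add_sub_cancel_left] at this
    simpa [smul_smul, hr.ne'] using (vectorSpan ℝ s).smul_mem r⁻¹ this

theorem eventually_dotProduct_pos {g x d : Fin E → ℝ} (h : 0 < g ⬝ᵥ x) :
    ∀ᶠ r : ℝ in 𝓝[>] 0, 0 < g ⬝ᵥ (x + r • d) := by
  have : Continuous fun r : ℝ => g ⬝ᵥ (x + r • d) := by
    simp only [dotProduct_add, dotProduct_smul]; fun_prop
  exact ((this.tendsto 0).eventually_const_lt (by simpa using h)).filter_mono nhdsWithin_le_nhds

theorem eventually_nonneg {x : Fin E → ℝ} (h : ∀ i, 0 < x i) (d : Fin E → ℝ) :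
    ∀ᶠ r : ℝ in 𝓝[>] 0, 0 ≤ x + r • d := by
  have (i : Fin E) : ∀ᶠ r : ℝ in 𝓝[>] 0, 0 < x i + r * d i := by
    have := eventually_dotProduct_pos (g := Pi.single i 1) (x := x) (d := d) (by simpa using h i)
    simpa using this
  filter_upwards [eventually_all.2 this] with r hr i
  exact (hr i).le

/-- A strictly positive vector at which `a` is strictly better than all its non-duplicates. -/
structure IsStrictPoint (L : Fin K → Fin E → ℝ) (a : Fin K) (w : Fin E → ℝ) : Prop where
  pos : ∀ i, 0 < w i
  lt : ∀ b, L b ≠ L a → 0 < (L b - L a) ⬝ᵥ w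

theorem sum_pos_of_pos (hE : 2 ≤ E) {w : Fin E → ℝ} (hw : ∀ i, 0 < w i) : 0 < ∑ i, w i :=
  Finset.sum_pos (fun i _ => hw i) ⟨⟨0, by omega⟩, Finset.mem_univ _⟩

theorem IsStrictPoint.smul {L : Fin K → Fin E → ℝ} {a : Fin K} {w : Fin E → ℝ}
    (h : IsStrictPoint L a w) {c : ℝ} (hc : 0 < c) : IsStrictPoint L a (c • w) :=
  ⟨fun i => mul_pos hc (h.pos i), fun b hb => by
    rw [dotProduct_smul]; exact mul_pos hc (h.lt b hb)⟩

theorem IsStrictPoint.paretoOptimal (hE : 2 ≤ E) {L : Fin K → Fin E → ℝ} {a : Fin K}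
    {w : Fin E → ℝ} (h : IsStrictPoint L a w) : ParetoOptimal L a := by
  wlog hw : ∑ i, w i = 1 generalizing w
  · have hpos := sum_pos_of_pos hE h.pos
    refine this (h.smul (inv_pos.2 hpos)) ?_
    simp [← Finset.mul_sum, hpos.ne']
  have key : ∀ d ∈ (dotLin (1 : Fin E → ℝ)).ker, ∃ r > (0 : ℝ), w + r • d ∈ cell L a := by
    intro d hd
    have h1 (b : Fin K) : ∀ᶠ r : ℝ in 𝓝[>] 0, 0 ≤ (L b - L a) ⬝ᵥ (w + r • d) := by
      by_cases hb : L b = L a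
      · simp [hb]
      · exact (eventually_dotProduct_pos (h.lt b hb)).mono fun _ => le_of_lt
    obtain ⟨r, hr, hr0, hr1⟩ := (eventually_mem_nhdsWithin.and
      ((eventually_nonneg h.pos d).and (eventually_all.2 h1))).exists
    refine ⟨r, hr, mem_cell_iff.2 ⟨hr0, ?_, fun b => ?_⟩⟩
    · rw [LinearMap.mem_ker, dotLin_apply, one_dotProduct_eq_sum] at hd
      simp [Finset.sum_add_distrib, ← Finset.mul_sum, hd, hw]
    · have := hr1 b
      rw [sub_dotProduct] at this
      linarith
  have hwc : w ∈ cell L a := by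
    obtain ⟨r, -, hr⟩ := key 0 (Submodule.zero_mem _)
    simpa using hr
  refine ⟨⟨w, hwc⟩, ?_⟩
  rw [dimSet, direction_affineSpan_eq hwc (fun y hy => ?_) key,
    finrank_ker_dotLin (one_ne_zero_of_two_le hE)]
  rw [LinearMap.mem_ker, map_sub, dotLin_apply, dotLin_apply, one_dotProduct_eq_sum,
    one_dotProduct_eq_sum, hw, (mem_cell_iff.1 hy).2.1, sub_self]

/-- A functional that vanishes on a cell of full dimension is zero. -/
theorem ParetoOptimal.eq_zero_of_forall_cell (hE : 2 ≤ E) {L : Fin K → Fin E → ℝ} {a : Fin K}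
    (ha : ParetoOptimal L a) {g : Fin E → ℝ} (hg : ∀ u ∈ cell L a, g ⬝ᵥ u = 0) : g = 0 := by
  obtain ⟨⟨x, hx⟩, hd⟩ := ha
  have h1 : (affineSpan ℝ (cell L a)).direction ≤ (dotLin g).ker ⊓ (dotLin 1).ker := by
    rw [direction_affineSpan, vectorSpan_eq_span_vsub_set_right ℝ hx, Submodule.span_le]
    rintro _ ⟨y, hy, rfl⟩
    refine ⟨?_, ?_⟩ <;>
      simp only [SetLike.mem_coe, LinearMap.mem_ker, vsub_eq_sub, map_sub, dotLin_apply]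
    · rw [hg y hy, hg x hx, sub_self]
    · rw [one_dotProduct_eq_sum, one_dotProduct_eq_sum, (mem_cell_iff.1 hx).2.1,
        (mem_cell_iff.1 hy).2.1, sub_self]
  by_contra hne
  have hgg : g ⬝ᵥ g ≠ 0 := fun h => hne (dotProduct_self_eq_zero.1 h)
  have h2 := finrank_ker_inf_ker hgg (hg x hx)
    (by rw [one_dotProduct_eq_sum, (mem_cell_iff.1 hx).2.1]; exact one_ne_zero)
  have h3 := Submodule.finrank_mono h1
  rw [h2] at h3
  rw [dimSet] at hd
  omega

theorem ParetoOptimal.exists_isStrictPoint (hE : 2 ≤ E) {L : Fin K → Fin E → ℝ} {a : Fin K}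
    (ha : ParetoOptimal L a) : ∃ w, IsStrictPoint L a w := by
  have hx (g : Fin E → ℝ) (hg : ∀ u ∈ cell L a, 0 ≤ g ⬝ᵥ u) :
      ∃ u ∈ cell L a, g ≠ 0 → 0 < g ⬝ᵥ u := by
    by_cases h0 : g = 0
    · obtain ⟨u, hu⟩ := ha.1
      exact ⟨u, hu, fun h => (h h0).elim⟩
    · by_contra! h
      exact h0 (ha.eq_zero_of_forall_cell hE fun u hu => le_antisymm (h u hu).2 (hg u hu))
  have hb (b : Fin K) (u) (hu : u ∈ cell L a) : 0 ≤ (L b - L a) ⬝ᵥ u := by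
    rw [sub_dotProduct, sub_nonneg]; exact (mem_cell_iff.1 hu).2.2 b
  have hi (i : Fin E) (u) (hu : u ∈ cell L a) : 0 ≤ (Pi.single i 1 : Fin E → ℝ) ⬝ᵥ u := by
    simpa using (mem_cell_iff.1 hu).1 i
  choose p hp hp' using fun i => hx _ (hi i)
  choose q hq hq' using fun b => hx _ (hb b)
  have hpos (g : Fin E → ℝ) (hg : ∀ u ∈ cell L a, 0 ≤ g ⬝ᵥ u)
      (h : (∃ i, 0 < g ⬝ᵥ p i) ∨ ∃ b, 0 < g ⬝ᵥ q b) : 0 < g ⬝ᵥ (∑ i, p i + ∑ b, q b) := by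
    rw [dotProduct_add, dotProduct_sum, dotProduct_sum]
    have h1 : ∀ i ∈ Finset.univ, 0 ≤ g ⬝ᵥ p i := fun i _ => hg _ (hp i)
    have h2 : ∀ b ∈ Finset.univ, 0 ≤ g ⬝ᵥ q b := fun b _ => hg _ (hq b)
    rcases h with ⟨i, h⟩ | ⟨b, h⟩
    · exact add_pos_of_pos_of_nonneg (Finset.sum_pos' h1 ⟨i, Finset.mem_univ i, h⟩)
        (Finset.sum_nonneg h2)
    · exact add_pos_of_nonneg_of_pos (Finset.sum_nonneg h1)
        (Finset.sum_pos' h2 ⟨b, Finset.mem_univ b, h⟩)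
  refine ⟨∑ i, p i + ∑ b, q b, fun i => ?_, fun b hne => ?_⟩
  · have := hpos _ (hi i) (.inl ⟨i, hp' i (by simp)⟩)
    rwa [single_one_dotProduct] at this
  · exact hpos _ (hb b) (.inr ⟨b, hq' b (sub_ne_zero.2 hne)⟩)

theorem dense_dotProduct_ne_zero {g : Fin E → ℝ} (hg : g ≠ 0) :
    Dense {v : Fin E → ℝ | g ⬝ᵥ v ≠ 0} := by
  intro v
  by_cases hv : g ⬝ᵥ v = 0
  · have h : Tendsto (fun r : ℝ => v + r • g) (𝓝[>] 0) (𝓝 v) := by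
      have : Continuous fun r : ℝ => v + r • g := by fun_prop
      simpa using (this.tendsto 0).mono_left nhdsWithin_le_nhds
    refine mem_closure_of_tendsto h (eventually_mem_nhdsWithin.mono fun r hr => ?_)
    have hgg : g ⬝ᵥ g ≠ 0 := fun h => hg (dotProduct_self_eq_zero.1 h)
    simpa [hv, hgg] using (show r > 0 from hr).ne'
  · exact subset_closure hv

/-- A maximal duplicate-free set of Pareto optimal actions covers the nonnegative orthant. -/
theorem exists_mem_forall_le (hK : 2 ≤ K) {L : Fin K → Fin E → ℝ}
    {𝒜 : Finset (Fin K)} (h𝒜 : ∀ b w, IsStrictPoint L b w → ∃ c ∈ 𝒜, L c = L b)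
    {v : Fin E → ℝ} (hv : 0 ≤ v) : ∃ b ∈ 𝒜, ∀ c, L b ⬝ᵥ v ≤ L c ⬝ᵥ v := by
  have : Nonempty (Fin K) := ⟨⟨0, by omega⟩⟩
  set G : Set (Fin E → ℝ) :=
    ⋂ p : Fin K × Fin K, {v | L p.1 - L p.2 ≠ 0 → (L p.1 - L p.2) ⬝ᵥ v ≠ 0} with hG
  have hGd : Dense G := by
    refine dense_iInter_of_isOpen (fun p => ?_) fun p => ?_
    all_goals by_cases h : L p.1 - L p.2 = 0
    · simp [h]
    · simp only [h, not_false_eq_true, ne_eq, forall_const]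
      exact isOpen_ne_fun (LinearMap.continuous_of_finiteDimensional (dotLin _))
        continuous_const
    · simp [h]
    · simpa only [h, not_false_eq_true, ne_eq, forall_const] using dense_dotProduct_ne_zero h
  set O : Set (Fin E → ℝ) := Set.univ.pi fun _ => Set.Ioi 0
  have hO : IsOpen O := isOpen_set_pi Set.finite_univ fun _ _ => isOpen_Ioi
  have hvO : v ∈ closure O := by
    rw [closure_pi_set]
    intro i _
    rw [closure_Ioi]
    exact hv i
  have hvU : v ∈ closure (O ∩ G) :=
    closure_minimal (hGd.open_subset_closure_inter hO) isClosed_closure hvO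
  have hcl : IsClosed (⋃ b ∈ 𝒜, ⋂ c, {v | L b ⬝ᵥ v ≤ L c ⬝ᵥ v}) :=
    isClosed_biUnion_finset fun b _ => isClosed_iInter fun c =>
      isClosed_le (LinearMap.continuous_of_finiteDimensional (dotLin _))
        (LinearMap.continuous_of_finiteDimensional (dotLin _))
  have := closure_minimal (fun y hy => ?_) hcl hvU
  · simpa using this
  · obtain ⟨b, hb⟩ := Finite.exists_min fun b => L b ⬝ᵥ y
    have hs : IsStrictPoint L b y := by
      refine ⟨fun i => hy.1 i (Set.mem_univ i), fun c hc => ?_⟩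
      have h1 := Set.mem_iInter.1 hy.2 (c, b) (sub_ne_zero.2 hc)
      refine lt_of_le_of_ne ?_ (Ne.symm h1)
      rw [sub_dotProduct, sub_nonneg]
      exact hb c
    obtain ⟨c, hc, hcb⟩ := h𝒜 b y hs
    simp only [Set.mem_iUnion, Set.mem_iInter, Set.mem_ofPred_eq, exists_prop]
    exact ⟨c, hc, fun d => hcb ▸ hb d⟩

/-- The constraints indexed by `S` suffice to describe the cone over the cell of `a`. -/
def Describes (L : Fin K → Fin E → ℝ) (a : Fin K) (S : Finset (Fin K)) : Prop :=
  ∀ v : Fin E → ℝ, 0 ≤ v → (∀ b ∈ S, 0 ≤ (L b - L a) ⬝ᵥ v) → ∀ c, 0 ≤ (L c - L a) ⬝ᵥ v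

/-- Irredundant constraints come from non-duplicate neighbors. -/
theorem neighbors_of_minimal (hE : 2 ≤ E) {L : Fin K → Fin E → ℝ} {a b : Fin K}
    {S : Finset (Fin K)} (ha : ParetoOptimal L a) (hPO : ∀ b ∈ S, ParetoOptimal L b)
    (hS : Minimal (Describes L a) S) (hb : b ∈ S) : Neighbors L a b ∧ L b ≠ L a := by
  have exch (c : Fin K) (hc : c ∈ S) : ∃ v : Fin E → ℝ, 0 ≤ v ∧
      (∀ b' ∈ S, b' ≠ c → 0 ≤ (L b' - L a) ⬝ᵥ v) ∧ (L c - L a) ⬝ᵥ v < 0 := by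
    have h := hS.not_prop_of_lt (Finset.erase_ssubset hc)
    simp only [Describes] at h
    push Not at h
    obtain ⟨v, hv, hv', d, hd⟩ := h
    refine ⟨v, hv, fun b' hb' hne => hv' b' (Finset.mem_erase.2 ⟨hne, hb'⟩), ?_⟩
    by_contra! hcv
    refine (hS.prop v hv (fun b' hb' => ?_) d).not_gt hd
    by_cases hne : b' = c
    · exact hne ▸ hcv
    · exact hv' b' (Finset.mem_erase.2 ⟨hne, hb'⟩)
  have hne (c : Fin K) (hc : c ∈ S) : L c ≠ L a := by
    obtain ⟨v, -, -, h⟩ := exch c hc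
    rintro h0
    simp [h0] at h
  obtain ⟨v, hv, hvS, hvb⟩ := exch b hb
  obtain ⟨w, hw⟩ := ha.exists_isStrictPoint hE
  have hbw := hw.lt b (hne b hb)
  obtain ⟨x, hx, hxb, hxS, hx1⟩ : ∃ x : Fin E → ℝ, (∀ i, 0 < x i) ∧ (L b - L a) ⬝ᵥ x = 0 ∧
      (∀ c ∈ S, c ≠ b → 0 < (L c - L a) ⬝ᵥ x) ∧ ∑ i, x i = 1 := by
    set α := ((L b - L a) ⬝ᵥ w) / (-((L b - L a) ⬝ᵥ v)) with hα
    have hα0 : 0 < α := div_pos hbw (by linarith)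
    set y := w + α • v with hy
    have hy0 (i : Fin E) : 0 < y i :=
      add_pos_of_pos_of_nonneg (hw.pos i) (mul_nonneg hα0.le (hv i))
    have hsum := sum_pos_of_pos hE hy0
    refine ⟨(∑ i, y i)⁻¹ • y, fun i => mul_pos (inv_pos.2 hsum) (hy0 i), ?_, fun c hc hcb => ?_,
      ?_⟩
    · have : (L b - L a) ⬝ᵥ y = 0 := by
        rw [hy, dotProduct_add, dotProduct_smul, hα, smul_eq_mul, div_neg, neg_mul,
          div_mul_cancel₀ _ hvb.ne, add_neg_cancel]
      rw [dotProduct_smul, this, smul_zero]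
    · rw [dotProduct_smul, hy, dotProduct_add, dotProduct_smul]
      exact mul_pos (inv_pos.2 hsum) (add_pos_of_pos_of_nonneg (hw.lt c (hne c hc))
        (mul_nonneg hα0.le (hvS c hc hcb)))
    · simp [← Finset.mul_sum, hsum.ne']
  have key : ∀ d ∈ (dotLin (L b - L a)).ker ⊓ (dotLin (1 : Fin E → ℝ)).ker,
      ∃ r > (0 : ℝ), x + r • d ∈ cell L a ∩ cell L b := by
    rintro d ⟨hdb, hd1⟩
    simp only [SetLike.mem_coe, LinearMap.mem_ker, dotLin_apply] at hdb hd1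
    have h1 (c : Fin K) : ∀ᶠ r : ℝ in 𝓝[>] 0, c ∈ S → 0 ≤ (L c - L a) ⬝ᵥ (x + r • d) := by
      by_cases hcb : c = b
      · simp [hcb, dotProduct_add, hxb, hdb]
      · by_cases hc : c ∈ S
        · exact (eventually_dotProduct_pos (hxS c hc hcb)).mono fun _ h _ => h.le
        · simp [hc]
    obtain ⟨r, hr, hr0, hr1⟩ := (eventually_mem_nhdsWithin.and
      ((eventually_nonneg hx d).and (eventually_all.2 h1))).exists
    have h2 := hS.prop _ hr0 hr1
    have h3 : (L b - L a) ⬝ᵥ (x + r • d) = 0 := by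
      rw [dotProduct_add, dotProduct_smul, hxb, hdb, smul_zero, add_zero]
    have h4 : ∑ i, (x + r • d) i = 1 := by
      rw [one_dotProduct_eq_sum] at hd1
      simp [Finset.sum_add_distrib, ← Finset.mul_sum, hd1, hx1]
    simp only [sub_dotProduct] at h2 h3
    exact ⟨r, hr, mem_cell_iff.2 ⟨hr0, h4, fun c => by linarith [h2 c]⟩,
      mem_cell_iff.2 ⟨hr0, h4, fun c => by linarith [h2 c]⟩⟩
  have hxc : x ∈ cell L a ∩ cell L b := by
    obtain ⟨r, -, hr⟩ := key 0 (Submodule.zero_mem _)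
    simpa using hr
  refine ⟨⟨ha, hPO b hb, ⟨x, hxc⟩, ?_⟩, hne b hb⟩
  rw [dimSet, direction_affineSpan_eq hxc (fun y hy => ?_) key,
    finrank_ker_inf_ker hbw.ne' hxb (by rw [one_dotProduct_eq_sum, hx1]; exact one_ne_zero)]
  obtain ⟨-, hy1, hya⟩ := mem_cell_iff.1 hy.1
  obtain ⟨-, -, hyb⟩ := mem_cell_iff.1 hy.2
  refine ⟨?_, ?_⟩ <;> simp only [SetLike.mem_coe, LinearMap.mem_ker, map_sub, dotLin_apply]
  · rw [hxb, sub_dotProduct]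
    linarith [hya b, hyb a]
  · rw [one_dotProduct_eq_sum, one_dotProduct_eq_sum, hx1, hy1, sub_self]

/-- The regret of `a` is controlled by its regret against the neighborhood of `a`. -/
theorem exists_const_le_mul_nbhd (hE : 2 ≤ E) {L : Fin K → Fin E → ℝ} {𝒜 : Finset (Fin K)}
    (hPO : ∀ b ∈ 𝒜, ParetoOptimal L b)
    (hcov : ∀ v : Fin E → ℝ, 0 ≤ v → ∃ b ∈ 𝒜, ∀ c, L b ⬝ᵥ v ≤ L c ⬝ᵥ v)
    {a : Fin K} (ha : a ∈ 𝒜) :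
    ∃ C ≥ (0 : ℝ), ∀ v : Fin E → ℝ, 0 ≤ v → ∀ c, ∃ b ∈ 𝒜, InNbhd L a b ∧
      0 ≤ (L a - L b) ⬝ᵥ v ∧ (L a - L c) ⬝ᵥ v ≤ C * ((L a - L b) ⬝ᵥ v) := by
  have hdes : Describes L a 𝒜 := by
    intro v hv h c
    obtain ⟨b, hb, hbc⟩ := hcov v hv
    have := h b hb
    rw [sub_dotProduct] at this ⊢
    linarith [hbc c]
  obtain ⟨S, hS𝒜, hS⟩ := exists_minimal_le_of_wellFoundedLT (Describes L a) 𝒜 hdes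
  have hnb (b) (hb : b ∈ S) := neighbors_of_minimal hE (hPO a ha) (fun b hb => hPO b (hS𝒜 hb)) hS hb
  obtain ⟨w, hw⟩ := (hPO a ha).exists_isStrictPoint hE
  have hgw (c : Fin K) : 0 ≤ (L c - L a) ⬝ᵥ w := by
    by_cases h : L c = L a
    · simp [h]
    · exact (hw.lt c h).le
  set C := ∑ b ∈ S, 1 / ((L b - L a) ⬝ᵥ w)
  set D := ∑ c, (L c - L a) ⬝ᵥ w
  have hC : 0 ≤ C := Finset.sum_nonneg fun b _ => one_div_nonneg.2 (hgw b)
  have hD : 0 ≤ D := Finset.sum_nonneg fun c _ => hgw c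
  refine ⟨C * D, mul_nonneg hC hD, fun v hv c => ?_⟩
  obtain ⟨m, hm, hmax⟩ := Finset.exists_max_image (insert a S) (fun b => (L a - L b) ⬝ᵥ v)
    ⟨a, Finset.mem_insert_self a S⟩
  set M := (L a - L m) ⬝ᵥ v with hMdef
  have hM : 0 ≤ M := by simpa using hmax a (Finset.mem_insert_self a S)
  have hMC : 0 ≤ M * C := mul_nonneg hM hC
  have h1 := hS.prop (v + (M * C) • w)
    (add_nonneg hv (smul_nonneg hMC fun i => (hw.pos i).le)) (fun b hb => ?_) c
  · have hmN : m ∈ 𝒜 ∧ InNbhd L a m := by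
      rcases Finset.mem_insert.1 hm with rfl | h
      · exact ⟨ha, .inl rfl⟩
      · exact ⟨hS𝒜 h, .inr (hnb m h)⟩
    refine ⟨m, hmN.1, hmN.2, hM, ?_⟩
    rw [dotProduct_add, dotProduct_smul, smul_eq_mul] at h1
    have h2 : (L c - L a) ⬝ᵥ w ≤ D :=
      Finset.single_le_sum (f := fun c => (L c - L a) ⬝ᵥ w) (fun c _ => hgw c) (Finset.mem_univ c)
    have h3 := mul_le_mul_of_nonneg_left h2 hMC
    rw [← neg_sub (L c) (L a), neg_dotProduct]
    linarith
  · have hbw := hw.lt b (hnb b hb).2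
    have h2 : 1 / ((L b - L a) ⬝ᵥ w) ≤ C :=
      Finset.single_le_sum (f := fun b => 1 / ((L b - L a) ⬝ᵥ w))
        (fun c _ => one_div_nonneg.2 (hgw c)) hb
    rw [div_le_iff₀ hbw] at h2
    have h3 := mul_le_mul_of_nonneg_left h2 hM
    have h4 := hmax b (Finset.mem_insert_of_mem hb)
    rw [← neg_sub (L b) (L a), neg_dotProduct] at h4
    rw [dotProduct_add, dotProduct_smul, smul_eq_mul]
    linarith

end

theorem stmt3 {K E : ℕ} (hK : 2 ≤ K) (hE : 2 ≤ E)
    (L : Fin K → Fin E → ℝ) (hL : ∀ a i, L a i ∈ Set.Icc (0 : ℝ) 1)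
    (𝒜 : Finset (Fin K))
    (h𝒜P : ∀ a ∈ 𝒜, ParetoOptimal L a)
    (h𝒜D : ∀ a ∈ 𝒜, ∀ b ∈ 𝒜, L a = L b → a = b)
    (h𝒜max : ∀ B : Finset (Fin K), (∀ a ∈ B, ParetoOptimal L a) →
      (∀ a ∈ B, ∀ b ∈ B, L a = L b → a = b) → B.card ≤ 𝒜.card) :
    ∃ ε > (0 : ℝ), ∀ (n : ℕ) (u : Fin n → Fin E → ℝ), (∀ t, u t ∈ probSimplex E) →
      ∀ B : Fin n → Fin K, (∀ t, B t ∈ 𝒜) →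
      ∀ astar : Fin K,
        (∀ a : Fin K, ∑ t, ∑ i, L astar i * u t i ≤ ∑ t, ∑ i, L a i * u t i) →
        ∃ φ : Fin K → Fin K,
          (∀ a ∈ 𝒜, φ a ∈ 𝒜 ∧ InNbhd L a (φ a)) ∧
          ∑ t, ∑ i, (L (B t) i - L astar i) * u t i ≤
            (1 / ε) * ∑ t, ∑ i, (L (B t) i - L (φ (B t)) i) * u t i := by
  have hdup : ∀ b w, IsStrictPoint L b w → ∃ c ∈ 𝒜, L c = L b := by
    intro b w hw
    by_contra! h
    have hb : b ∉ 𝒜 := fun hb => h b hb rfl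
    have := h𝒜max (insert b 𝒜) (fun a ha => ?_) fun a ha c hc hac => ?_
    · rw [Finset.card_insert_of_notMem hb] at this
      omega
    · rcases Finset.mem_insert.1 ha with rfl | ha
      · exact hw.paretoOptimal hE
      · exact h𝒜P a ha
    · rcases Finset.mem_insert.1 ha with rfl | ha' <;>
        rcases Finset.mem_insert.1 hc with rfl | hc'
      · rfl
      · exact (h c hc' hac.symm).elim
      · exact (h a ha' hac).elim
      · exact h𝒜D a ha' c hc' hac
  have hconst (a : Fin K) : ∃ C ≥ (0 : ℝ), a ∈ 𝒜 → ∀ v : Fin E → ℝ, 0 ≤ v → ∀ c, ∃ b ∈ 𝒜,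
      InNbhd L a b ∧ 0 ≤ (L a - L b) ⬝ᵥ v ∧
        (L a - L c) ⬝ᵥ v ≤ C * ((L a - L b) ⬝ᵥ v) := by
    by_cases ha : a ∈ 𝒜
    · obtain ⟨C, hC, h⟩ := exists_const_le_mul_nbhd hE h𝒜P
        (fun v hv => exists_mem_forall_le hK hdup hv) ha
      exact ⟨C, hC, fun _ => h⟩
    · exact ⟨0, le_rfl, fun h => (ha h).elim⟩
  choose C hC hCb using hconst
  have hCsum : 0 ≤ ∑ a, C a := Finset.sum_nonneg fun a _ => hC a
  refine ⟨1 / (1 + ∑ a, C a), by positivity, fun n u hu B hB astar _ => ?_⟩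
  set V : Fin K → Fin E → ℝ := fun a => ∑ t with B t = a, u t with hV
  have hV0 (a : Fin K) : 0 ≤ V a := Finset.sum_nonneg fun t _ i => ((hu t).1 i).1
  have hφ (a : Fin K) : ∃ b, a ∈ 𝒜 → b ∈ 𝒜 ∧ InNbhd L a b ∧ 0 ≤ (L a - L b) ⬝ᵥ V a ∧
      (L a - L astar) ⬝ᵥ V a ≤ C a * ((L a - L b) ⬝ᵥ V a) := by
    by_cases ha : a ∈ 𝒜
    · obtain ⟨b, hb⟩ := hCb a ha (V a) (hV0 a) astar
      exact ⟨b, fun _ => hb⟩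
    · exact ⟨a, fun h => (ha h).elim⟩
  choose φ hφ using hφ
  have hfiber (ψ : Fin K → Fin K) :
      ∑ t, ∑ i, (L (B t) i - L (ψ (B t)) i) * u t i = ∑ a ∈ 𝒜, (L a - L (ψ a)) ⬝ᵥ V a := by
    rw [← Finset.sum_fiberwise_of_maps_to (fun t _ => hB t)]
    refine Finset.sum_congr rfl fun a _ => ?_
    rw [hV, dotProduct_sum]
    refine Finset.sum_congr rfl fun t ht => ?_
    rw [(Finset.mem_filter.1 ht).2]
    rfl
  refine ⟨φ, fun a ha => ⟨(hφ a ha).1, (hφ a ha).2.1⟩, ?_⟩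
  rw [hfiber fun _ => astar, hfiber φ, one_div_one_div, Finset.mul_sum]
  refine Finset.sum_le_sum fun a ha => (hφ a ha).2.2.2.trans
    (mul_le_mul_of_nonneg_right ?_ (hφ a ha).2.2.1)
  have := Finset.single_le_sum (f := C) (fun a _ => hC a) (Finset.mem_univ a)
  linarith
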